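/- Let U ⊆ ℝ⁴ be an open bounded set, star-shaped with respect to the origin, and let N ∈ ℕ. There is a constant C, depending only on N and the diameter of U, with the following property. Let β : U → Alt²(ℝ⁴; ℝ) be a 2-form of class C^{N+1} which is closed (the alternation of its derivative vanishes: Dβ(x)[u](v,w) − Dβ(x)[v](u,w) + Dβ(x)[w](u,v) = 0 for all x,u,v,w) and whose pull-back to the plane P := {x₃ = x₄ = 0} vanishes, i.e. β(x)(e₁,e₂) = 0 for all x ∈ U ∩ P. Then there exists a 1-form α : U → (ℝ⁴)* of class C^N such that: (1) dα = β, i.e. Dα(x)[u](v) − Dα(x)[v](u) = β(x)(u,v) for all x, u, v; (2) α(x) = 0 for every x ∈ U ∩ P; (3) ‖α‖_{C^N(U)} ≤ C ‖β‖_{C^{N+1}(U)}. -/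

import Mathlib

noncomputable abbrev E4 : Type := EuclideanSpace ℝ (Fin 4)

/-!
Let `a` be the radial primitive of `β` from the classical Poincaré lemma. Since `β` restricts to
zero on `P`, along `P` the form `a` vanishes on vectors tangent to `P`, and it remains to subtract
an exact form which removes the normal components of `a` along `P`.

With `Q` the projection normal to `P`, the function `f x = a x (Q x)` satisfies `df = a ∘ Q` along
`P`, so `a - df` vanishes there. Passing to `df` costs one derivative, which is affordable if
`N ≥ 1`.

For `N = 0` the form `a - df` would only be continuous. Instead, integrate `a` along the normal
segments to `P`: the resulting function `F` satisfies `dF = a - h β` with `h` the chain homotopy of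
the retraction onto `P`, so that `F` is `C²` although `a` is only `C¹`. It is defined in a tube
around `P ∩ U` only, and has to be multiplied by a cutoff `χ`. If `χ` is a function of the ratio
`q² / (p² + q²)`, where `p` is the distance to `P` and `q` the value of a `1`-Lipschitz defining
function of `U` at the foot of the perpendicular, then `p |∇χ|` is bounded independently of `U` by
homogeneity, and this balances the estimate `|F| ≤ p sup |a|` in `d(χ F)`.
-/

open Set Filter MeasureTheory Function intervalIntegral
open scoped Topology ContDiff Interval

section ContinuousParametricIntegral

variable {X F : Type*} [TopologicalSpace X] [NormedAddCommGroup F]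
  {Φ : ℝ → X → F} {V : Set X} {a b : ℝ} {x : X}

theorem continuousOn_slice (hΦ : ContinuousOn (uncurry Φ) (uIcc a b ×ˢ V)) (hx : x ∈ V) :
    ContinuousOn (Φ · x) (uIcc a b) :=
  (hΦ.comp (by fun_prop) fun _ ht => ⟨ht, hx⟩ : ContinuousOn (uncurry Φ ∘ (·, x)) _)

theorem exists_eventually_forall_uIcc_norm_le (hV : IsOpen V)
    (hΦ : ContinuousOn (uncurry Φ) (uIcc a b ×ˢ V)) (hx : x ∈ V) :
    ∃ C, ∀ᶠ y in 𝓝 x, ∀ t ∈ uIcc a b, ‖Φ t y‖ ≤ C := by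
  obtain ⟨C, hC⟩ := isCompact_uIcc.bddAbove_image (continuousOn_slice hΦ hx).norm
  have hnear : ∀ t ∈ uIcc a b, ∀ᶠ z : X × ℝ in 𝓝 (x, t),
      z.2 ∈ uIcc a b → z.1 ∈ V → ‖Φ z.2 z.1‖ ≤ C + 1 := by
    intro t ht
    have hlt : ‖Φ t x‖ < C + 1 := (hC (mem_image_of_mem _ ht)).trans_lt (lt_add_one C)
    have hle := (hΦ (t, x) ⟨ht, hx⟩).norm.tendsto.eventually_le_const hlt
    filter_upwards [(continuous_swap.tendsto (x, t)).eventually (eventually_nhdsWithin_iff.1 hle)]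
      with z hz ht hx using hz ⟨ht, hx⟩
  have hunif := isCompact_uIcc.eventually_forall_of_forall_eventually
    (P := fun y t => t ∈ uIcc a b → y ∈ V → ‖Φ t y‖ ≤ C + 1) hnear
  refine ⟨C + 1, ?_⟩
  filter_upwards [hV.mem_nhds hx, hunif] with y hy hbound t ht using hbound t ht ht hy

theorem eventually_aestronglyMeasurable_slice (hV : IsOpen V)
    (hΦ : ContinuousOn (uncurry Φ) (uIcc a b ×ˢ V)) (hx : x ∈ V) :
    ∀ᶠ y in 𝓝 x, AEStronglyMeasurable (Φ · y) (volume.restrict (Ι a b)) := by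
  filter_upwards [hV.mem_nhds hx] with y hy
  exact ((continuousOn_slice hΦ hy).mono uIoc_subset_uIcc).aestronglyMeasurable
    measurableSet_uIoc

theorem continuousOn_intervalIntegral_of_continuousOn_uncurry [FirstCountableTopology X]
    [NormedSpace ℝ F] (hV : IsOpen V) (hΦ : ContinuousOn (uncurry Φ) (uIcc a b ×ˢ V)) :
    ContinuousOn (fun x => ∫ t in a..b, Φ t x) V := by
  intro x hx
  obtain ⟨C, hC⟩ := exists_eventually_forall_uIcc_norm_le hV hΦ hx
  refine (continuousAt_of_dominated_interval (bound := fun _ => C)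
    (eventually_aestronglyMeasurable_slice hV hΦ hx)
    (hC.mono fun y hy => ae_of_all _ fun t ht => hy t (uIoc_subset_uIcc ht))
    intervalIntegrable_const (ae_of_all _ fun t ht => ?_)).continuousWithinAt
  exact (hΦ.comp (by fun_prop) fun y hy => ⟨uIoc_subset_uIcc ht, hy⟩ :
    ContinuousOn (uncurry Φ ∘ (t, ·)) V).continuousAt (hV.mem_nhds hx)

end ContinuousParametricIntegral

section SmoothParametricIntegral

variable {E F : Type*} [NormedAddCommGroup E] [NormedSpace ℝ E]
  [NormedAddCommGroup F] [NormedSpace ℝ F] {Φ : ℝ → E → F} {V : Set E} {a b : ℝ} {x : E}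

theorem hasFDerivAt_intervalIntegral_of_continuousOn_uncurry (hV : IsOpen V)
    {Φ' : ℝ → E → E →L[ℝ] F} (hΦ : ContinuousOn (uncurry Φ) (uIcc a b ×ˢ V))
    (hΦ' : ContinuousOn (uncurry Φ') (uIcc a b ×ˢ V))
    (hderiv : ∀ t ∈ uIcc a b, ∀ y ∈ V, HasFDerivAt (Φ t) (Φ' t y) y) (hx : x ∈ V) :
    HasFDerivAt (fun y => ∫ t in a..b, Φ t y) (∫ t in a..b, Φ' t x) x := by
  obtain ⟨C, hC⟩ := exists_eventually_forall_uIcc_norm_le hV hΦ' hx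
  exact hasFDerivAt_integral_of_dominated_of_fderiv_le (bound := fun _ => C)
    (inter_mem (hV.mem_nhds hx) hC)
    (eventually_aestronglyMeasurable_slice hV hΦ hx)
    (continuousOn_slice hΦ hx).intervalIntegrable
    (eventually_aestronglyMeasurable_slice hV hΦ' hx).self_of_nhds
    (ae_of_all _ fun t ht y hy => hy.2 t (uIoc_subset_uIcc ht)) intervalIntegrable_const
    (ae_of_all _ fun t ht y hy => hderiv t (uIoc_subset_uIcc ht) y hy.1)

variable {n : ℕ∞ω} {W : Set (ℝ × E)}

theorem hasFDerivAt_slice (hW : IsOpen W) (hΦ : ContDiffOn ℝ 1 (uncurry Φ) W) {t : ℝ}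
    (htx : (t, x) ∈ W) :
    HasFDerivAt (Φ t) ((fderiv ℝ (uncurry Φ) (t, x)).comp (ContinuousLinearMap.inr ℝ ℝ E)) x :=
  ((hΦ.differentiableOn one_ne_zero).differentiableAt (hW.mem_nhds htx)).hasFDerivAt.comp x
    (hasFDerivAt_prodMk_right t x)

theorem continuousOn_fderiv_slice (hW : IsOpen W) (hVW : uIcc a b ×ˢ V ⊆ W)
    (hΦ : ContDiffOn ℝ 1 (uncurry Φ) W) :
    ContinuousOn (uncurry fun t => fderiv ℝ (Φ t)) (uIcc a b ×ˢ V) :=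
  (((hΦ.continuousOn_fderiv_of_isOpen hW le_rfl).clm_comp
    (continuousOn_const (c := ContinuousLinearMap.inr ℝ ℝ E))).mono hVW).congr fun _ hp =>
      (hasFDerivAt_slice hW hΦ (hVW hp)).fderiv

theorem hasFDerivAt_intervalIntegral (hV : IsOpen V) (hW : IsOpen W)
    (hVW : uIcc a b ×ˢ V ⊆ W) (hΦ : ContDiffOn ℝ 1 (uncurry Φ) W) (hx : x ∈ V) :
    HasFDerivAt (fun x => ∫ t in a..b, Φ t x) (∫ t in a..b, fderiv ℝ (Φ t) x) x := by
  let inr := ContinuousLinearMap.inr ℝ ℝ E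
  have hderiv := hasFDerivAt_intervalIntegral_of_continuousOn_uncurry
    (Φ' := fun t x => (fderiv ℝ (uncurry Φ) (t, x)).comp inr) hV (hΦ.continuousOn.mono hVW)
    (((hΦ.continuousOn_fderiv_of_isOpen hW le_rfl).clm_comp continuousOn_const).mono hVW)
    (fun t ht y hy => hasFDerivAt_slice hW hΦ (hVW ⟨ht, hy⟩)) hx
  refine hderiv.congr_fderiv (integral_congr fun t ht => ?_)
  exact (hasFDerivAt_slice hW hΦ (hVW ⟨ht, hx⟩)).fderiv.symm

theorem iteratedFDeriv_eq_of_hasFTaylorSeriesUpToOn {f : E → F}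
    {p : E → FormalMultilinearSeries ℝ E F} (h : HasFTaylorSeriesUpToOn n f p V) (hV : IsOpen V)
    {m : ℕ} (hm : m ≤ n) (hx : x ∈ V) : p x m = iteratedFDeriv ℝ m f x :=
  (h.eq_iteratedFDerivWithin_of_uniqueDiffOn hm hV.uniqueDiffOn hx).trans
    (iteratedFDerivWithin_of_isOpen m hV hx)

/-- The Taylor series in `x` of the slice `Φ t`, obtained by restricting the joint Taylor series
of `Φ` on `W` to vectors tangent to the slice. -/
noncomputable def sliceTaylorSeries (Φ : ℝ → E → F) (W : Set (ℝ × E)) (t : ℝ) (x : E) :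
    FormalMultilinearSeries ℝ E F := fun m =>
  (ftaylorSeriesWithin ℝ (uncurry Φ) W (t, x) m).compContinuousLinearMap
    fun _ => ContinuousLinearMap.inr ℝ ℝ E

theorem hasFTaylorSeriesUpToOn_slice (hW : IsOpen W) (hΦ : ContDiffOn ℝ n (uncurry Φ) W)
    {t : ℝ} (ht : ∀ y ∈ V, (t, y) ∈ W) :
    HasFTaylorSeriesUpToOn n (Φ t) (sliceTaylorSeries Φ W t) V := by
  have hcomp := (hΦ.ftaylorSeriesWithin hW.uniqueDiffOn).comp_continuousAffineMap
    ((ContinuousAffineMap.const ℝ E t).prod (ContinuousAffineMap.id ℝ E))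
  have hlin : ((ContinuousAffineMap.const ℝ E t).prod (ContinuousAffineMap.id ℝ E)).contLinear
      = ContinuousLinearMap.inr ℝ ℝ E := by
    ext v
    · simp
    · exact rfl
  rw [hlin] at hcomp
  exact hcomp.mono ht

theorem continuousOn_sliceTaylorSeries (hW : IsOpen W) (hΦ : ContDiffOn ℝ n (uncurry Φ) W)
    {m : ℕ} (hm : m ≤ n) :
    ContinuousOn (uncurry fun t x => sliceTaylorSeries Φ W t x m) W :=
  (ContinuousMultilinearMap.compContinuousLinearMapL
    (fun _ : Fin m => ContinuousLinearMap.inr ℝ ℝ E)).continuous.comp_continuousOn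
    ((hΦ.ftaylorSeriesWithin hW.uniqueDiffOn).cont m hm)

variable [CompleteSpace F]

set_option maxSynthPendingDepth 3 in
theorem hasFTaylorSeriesUpToOn_intervalIntegral (hV : IsOpen V)
    {p : ℝ → E → FormalMultilinearSeries ℝ E F}
    (hp : ∀ t ∈ uIcc a b, HasFTaylorSeriesUpToOn n (Φ t) (p t) V)
    (hcont : ∀ m : ℕ, m ≤ n → ContinuousOn (uncurry fun t x => p t x m) (uIcc a b ×ˢ V)) :
    HasFTaylorSeriesUpToOn n (fun x => ∫ t in a..b, Φ t x)
      (fun x m => ∫ t in a..b, p t x m) V where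
  zero_eq x hx := by
    let L := (continuousMultilinearCurryFin0 ℝ E F).toLinearIsometry
    have hcurry : ∫ t in a..b, L (p t x 0) = L (∫ t in a..b, p t x 0) :=
      L.intervalIntegral_comp_comm _
    exact hcurry.symm.trans (integral_congr fun t ht => (hp t ht).zero_eq x hx)
  fderivWithin m hm x hx := by
    let L : (E [×(m + 1)]→L[ℝ] F) →ₗᵢ[ℝ] E →L[ℝ] E [×m]→L[ℝ] F :=
      (continuousMultilinearCurryLeftEquiv ℝ (fun _ : Fin (m + 1) => E) F).toLinearIsometry
    have hcurry : ∫ t in a..b, L (p t x (m + 1)) = L (∫ t in a..b, p t x (m + 1)) :=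
      L.intervalIntegral_comp_comm _
    have hderiv := hasFDerivAt_intervalIntegral_of_continuousOn_uncurry
      (Φ' := fun t x => L (p t x (m + 1))) hV (hcont m hm.le)
      (L.continuous.comp_continuousOn (hcont (m + 1) (ENat.add_one_natCast_le_withTop_of_lt hm)))
      (fun t ht y hy => ((hp t ht).fderivWithin m hm y hy).hasFDerivAt (hV.mem_nhds hy)) hx
    exact (hderiv.congr_fderiv hcurry).hasFDerivWithinAt
  cont m hm := continuousOn_intervalIntegral_of_continuousOn_uncurry hV (hcont m hm)

theorem hasFTaylorSeriesUpToOn_intervalIntegral_of_contDiffOn (hV : IsOpen V) (hW : IsOpen W)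
    (hVW : uIcc a b ×ˢ V ⊆ W) (hΦ : ContDiffOn ℝ n (uncurry Φ) W) :
    HasFTaylorSeriesUpToOn n (fun x => ∫ t in a..b, Φ t x)
      (fun x m => ∫ t in a..b, sliceTaylorSeries Φ W t x m) V :=
  hasFTaylorSeriesUpToOn_intervalIntegral hV
    (fun _ ht => hasFTaylorSeriesUpToOn_slice hW hΦ fun _ hy => hVW ⟨ht, hy⟩)
    fun _ hm => (continuousOn_sliceTaylorSeries hW hΦ hm).mono hVW

theorem contDiffOn_intervalIntegral {n : ℕ∞} (hV : IsOpen V) (hW : IsOpen W)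
    (hVW : uIcc a b ×ˢ V ⊆ W) (hΦ : ContDiffOn ℝ n (uncurry Φ) W) :
    ContDiffOn ℝ n (fun x => ∫ t in a..b, Φ t x) V :=
  (hasFTaylorSeriesUpToOn_intervalIntegral_of_contDiffOn hV hW hVW hΦ).contDiffOn

theorem iteratedFDeriv_intervalIntegral (hV : IsOpen V) (hW : IsOpen W)
    (hVW : uIcc a b ×ˢ V ⊆ W) (hΦ : ContDiffOn ℝ n (uncurry Φ) W) {m : ℕ} (hm : m ≤ n)
    (hx : x ∈ V) :
    iteratedFDeriv ℝ m (fun x => ∫ t in a..b, Φ t x) x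
      = ∫ t in a..b, iteratedFDeriv ℝ m (Φ t) x := by
  rw [← iteratedFDeriv_eq_of_hasFTaylorSeriesUpToOn
    (hasFTaylorSeriesUpToOn_intervalIntegral_of_contDiffOn hV hW hVW hΦ) hV hm hx]
  exact integral_congr fun t ht => iteratedFDeriv_eq_of_hasFTaylorSeriesUpToOn
    (hasFTaylorSeriesUpToOn_slice hW hΦ fun _ hy => hVW ⟨ht, hy⟩) hV hm hx

end SmoothParametricIntegral

section DerivativeBounds

variable {E F G : Type*} [NormedAddCommGroup E] [NormedSpace ℝ E] [NormedAddCommGroup F]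
  [NormedSpace ℝ F] [NormedAddCommGroup G] [NormedSpace ℝ G] {V : Set E} {x : E} {n : ℕ} {M D : ℝ}

theorem norm_iteratedFDeriv_clm_le (T : E →L[ℝ] F) (hT : ‖T‖ ≤ D) (hx : ‖T x‖ ≤ D) (i : ℕ) :
    ‖iteratedFDeriv ℝ i T x‖ ≤ D := by
  have hfderiv : fderiv ℝ T = fun _ => T := funext fun _ => T.fderiv
  match i with
  | 0 => rwa [norm_iteratedFDeriv_zero]
  | 1 => rwa [← norm_iteratedFDeriv_fderiv, hfderiv, norm_iteratedFDeriv_zero]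
  | i + 2 =>
    rw [← norm_iteratedFDeriv_fderiv, hfderiv, iteratedFDeriv_succ_const]
    simpa using (norm_nonneg T).trans hT

theorem norm_iteratedFDeriv_apply_clm_le (hV : IsOpen V) {f : E → F →L[ℝ] G}
    (hf : ContDiffOn ℝ n f V) (hx : x ∈ V) {T : E →L[ℝ] F} (hT : ‖T‖ ≤ D) (hTx : ‖T x‖ ≤ D)
    (hM : ∀ i ≤ n, ‖iteratedFDeriv ℝ i f x‖ ≤ M) :
    ‖iteratedFDeriv ℝ n (fun y => f y (T y)) x‖ ≤ 2 ^ n * (M * D) := by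
  have hM0 : 0 ≤ M := (norm_nonneg _).trans (hM 0 n.zero_le)
  rw [← iteratedFDerivWithin_of_isOpen n hV hx]
  calc
    _ ≤ ∑ i ∈ Finset.range (n + 1), (n.choose i) * ‖iteratedFDerivWithin ℝ i f V x‖ *
          ‖iteratedFDerivWithin ℝ (n - i) T V x‖ :=
      norm_iteratedFDerivWithin_clm_apply hf T.contDiff.contDiffOn hV.uniqueDiffOn hx le_rfl
    _ ≤ ∑ i ∈ Finset.range (n + 1), (n.choose i : ℝ) * (M * D) := by
      refine Finset.sum_le_sum fun i hi => ?_
      rw [iteratedFDerivWithin_of_isOpen i hV hx, iteratedFDerivWithin_of_isOpen (n - i) hV hx,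
        mul_assoc]
      gcongr
      · exact hM i (Nat.lt_succ_iff.1 (Finset.mem_range.1 hi))
      · exact norm_iteratedFDeriv_clm_le T hT hTx _
    _ = 2 ^ n * (M * D) := by
      rw [← Finset.sum_mul]
      exact_mod_cast congrArg (fun k : ℕ => (k : ℝ) * (M * D)) (Nat.sum_range_choose n)

theorem norm_iteratedFDeriv_comp_clm_le {U : Set F} (hU : IsOpen U) {f : F → G}
    (hf : ContDiffOn ℝ n f U) {L : E →L[ℝ] F} (hL : ‖L‖ ≤ 1) (hx : L x ∈ U) :
    ‖iteratedFDeriv ℝ n (fun y => f (L y)) x‖ ≤ ‖iteratedFDeriv ℝ n f (L x)‖ := by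
  have hpre : IsOpen (L ⁻¹' U) := hU.preimage L.continuous
  have hcomp := L.iteratedFDerivWithin_comp_right hf hU.uniqueDiffOn hpre.uniqueDiffOn hx le_rfl
  rw [iteratedFDerivWithin_of_isOpen n hpre hx, iteratedFDerivWithin_of_isOpen n hU hx] at hcomp
  calc
    ‖iteratedFDeriv ℝ n (f ∘ L) x‖
      ≤ ‖iteratedFDeriv ℝ n f (L x)‖ * ∏ _i : Fin n, ‖L‖ :=
      hcomp ▸ ContinuousMultilinearMap.norm_compContinuousLinearMap_le _ _
    _ ≤ ‖iteratedFDeriv ℝ n f (L x)‖ :=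
      mul_le_of_le_one_right (norm_nonneg _)
        (Finset.prod_le_one (fun _ _ => norm_nonneg _) fun _ _ => hL)

set_option maxSynthPendingDepth 3 in
theorem norm_iteratedFDeriv_comp_right_clm_le {f : E → F →L[ℝ] G} (hf : ContDiffAt ℝ n f x)
    {L : E →L[ℝ] F} (hL : ‖L‖ ≤ 1) :
    ‖iteratedFDeriv ℝ n (fun y => (f y).comp L) x‖ ≤ ‖iteratedFDeriv ℝ n f x‖ := by
  let compL : (F →L[ℝ] G) →L[ℝ] E →L[ℝ] G := (ContinuousLinearMap.compL ℝ E F G).flip L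
  have hcompL : ‖compL‖ ≤ 1 :=
    calc
      ‖compL‖ ≤ ‖(ContinuousLinearMap.compL ℝ E F G).flip‖ * ‖L‖ :=
        ContinuousLinearMap.le_opNorm _ L
      _ ≤ 1 * 1 := by
        rw [ContinuousLinearMap.opNorm_flip]
        gcongr
        exact ContinuousLinearMap.norm_compL_le ..
      _ = 1 := one_mul 1
  exact (compL.norm_iteratedFDeriv_comp_left hf le_rfl).trans
    (mul_le_of_le_one_left (norm_nonneg _) hcompL)

end DerivativeBounds

section Homotopy

variable {E F : Type*} [NormedAddCommGroup E] [NormedSpace ℝ E] [NormedAddCommGroup F]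
  [NormedSpace ℝ F]

/-- The `1`-form `α` is a primitive of the `2`-form `β` on `U`, i.e. `dα = β` there. -/
def IsPrimitiveOn (α : E → E →L[ℝ] F) (β : E → E →L[ℝ] E →L[ℝ] F) (U : Set E) : Prop :=
  ∀ x ∈ U, ∀ u v, fderiv ℝ α x u v - fderiv ℝ α x v u = β x u v

/-- `β` is a closed `2`-form on `U`. Forms are bilinear-map valued, so that being alternating is
part of the definition. -/
structure IsClosedTwoFormOn (β : E → E →L[ℝ] E →L[ℝ] F) (U : Set E) : Prop where
  antisymm : ∀ x ∈ U, ∀ u v, β x u v = -β x v u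
  closed : ∀ x ∈ U, ∀ u v w,
    fderiv ℝ β x u v w - fderiv ℝ β x v u w + fderiv ℝ β x w u v = 0

/-- The straight-line homotopy from the linear map `R` to the identity. -/
def lineHomotopy (R : E →L[ℝ] E) (t : ℝ) : E →L[ℝ] E :=
  (1 - t) • R + t • ContinuousLinearMap.id ℝ E

/-- The chain homotopy on `2`-forms induced by `lineHomotopy R`. For `R = 0` it is the radial
integral of the classical Poincaré lemma. -/
noncomputable def homotopyPrimitive (R : E →L[ℝ] E) (β : E → E →L[ℝ] E →L[ℝ] F) (x : E) :
    E →L[ℝ] F :=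
  ∫ t in (0 : ℝ)..1, (β (lineHomotopy R t x) (x - R x)).comp (lineHomotopy R t)

/-- The chain homotopy on `1`-forms induced by `lineHomotopy R`. -/
noncomputable def homotopyPotential (R : E →L[ℝ] E) (a : E → E →L[ℝ] F) (x : E) : F :=
  ∫ t in (0 : ℝ)..1, a (lineHomotopy R t x) (x - R x)

/-- The set of pairs `(t, x)` at which the integrands of the chain homotopies for forms on `U`
are evaluated inside `U`. -/
def homotopyDomain (R : E →L[ℝ] E) (U : Set E) : Set (ℝ × E) :=
  {p | lineHomotopy R p.1 p.2 ∈ U}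

variable {R : E →L[ℝ] E} {U V : Set E} {a : E → E →L[ℝ] F} {β : E → E →L[ℝ] E →L[ℝ] F}
  {n : ℕ∞ω} {t : ℝ} {x : E}

theorem lineHomotopy_apply (R : E →L[ℝ] E) (t : ℝ) (x : E) :
    lineHomotopy R t x = (1 - t) • R x + t • x := rfl

theorem lineHomotopy_zero (R : E →L[ℝ] E) : lineHomotopy R 0 = R := by simp [lineHomotopy]

theorem lineHomotopy_one (R : E →L[ℝ] E) : lineHomotopy R 1 = ContinuousLinearMap.id ℝ E := by
  simp [lineHomotopy]

theorem norm_lineHomotopy_le_one (hR : ‖R‖ ≤ 1) (ht : t ∈ Icc (0 : ℝ) 1) :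
    ‖lineHomotopy R t‖ ≤ 1 := by
  have ht' : 0 ≤ 1 - t := sub_nonneg.2 ht.2
  calc
    ‖lineHomotopy R t‖ ≤ (1 - t) * ‖R‖ + t * ‖ContinuousLinearMap.id ℝ E‖ := by
      refine (norm_add_le _ _).trans_eq ?_
      rw [norm_smul, norm_smul, Real.norm_of_nonneg ht.1, Real.norm_of_nonneg ht']
    _ ≤ (1 - t) * 1 + t * 1 := by
      gcongr
      · exact ht.1
      · exact ContinuousLinearMap.norm_id_le
    _ = 1 := by ring

theorem hasDerivAt_lineHomotopy_apply (R : E →L[ℝ] E) (t : ℝ) (x : E) :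
    HasDerivAt (fun t => lineHomotopy R t x) (x - R x) t := by
  have h := (((hasDerivAt_id t).const_sub 1).smul_const (R x)).add
    ((hasDerivAt_id t).smul_const x)
  exact h.congr_deriv (by simp only [neg_smul, one_smul]; abel)

theorem contDiff_lineHomotopy (R : E →L[ℝ] E) : ContDiff ℝ n (lineHomotopy R) := by
  unfold lineHomotopy; fun_prop

theorem contDiff_lineHomotopy_uncurry (R : E →L[ℝ] E) :
    ContDiff ℝ n fun p : ℝ × E => lineHomotopy R p.1 p.2 :=
  ((contDiff_lineHomotopy R).comp contDiff_fst).clm_apply contDiff_snd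

theorem isOpen_homotopyDomain (hU : IsOpen U) : IsOpen (homotopyDomain R U) :=
  hU.preimage (contDiff_lineHomotopy_uncurry (n := 0) R).continuous

theorem contDiffOn_homotopyPotential_integrand (ha : ContDiffOn ℝ n a U) :
    ContDiffOn ℝ n (uncurry fun t x => a (lineHomotopy R t x) (x - R x)) (homotopyDomain R U) :=
  (ha.comp (contDiff_lineHomotopy_uncurry R).contDiffOn fun _ hp => hp).clm_apply
    (by fun_prop : ContDiff ℝ n fun p : ℝ × E => p.2 - R p.2).contDiffOn

theorem contDiffOn_homotopyPrimitive_integrand (hβ : ContDiffOn ℝ n β U) :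
    ContDiffOn ℝ n
      (uncurry fun t x => (β (lineHomotopy R t x) (x - R x)).comp (lineHomotopy R t))
      (homotopyDomain R U) :=
  (contDiffOn_homotopyPotential_integrand hβ).clm_comp
    ((contDiff_lineHomotopy R).comp contDiff_fst).contDiffOn

theorem uIcc_prod_subset_homotopyDomain
    (hVU : ∀ t ∈ Icc (0 : ℝ) 1, ∀ x ∈ V, lineHomotopy R t x ∈ U) :
    uIcc (0 : ℝ) 1 ×ˢ V ⊆ homotopyDomain R U :=
  fun p hp => hVU p.1 (uIcc_of_le (zero_le_one' ℝ) ▸ hp.1) p.2 hp.2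

theorem norm_homotopyPotential_le {M : ℝ}
    (hM : ∀ t ∈ Icc (0 : ℝ) 1, ‖a (lineHomotopy R t x)‖ ≤ M) :
    ‖homotopyPotential R a x‖ ≤ M * ‖x - R x‖ := by
  refine (intervalIntegral.norm_integral_le_of_norm_le_const (C := M * ‖x - R x‖)
    fun t ht => ?_).trans_eq (by simp)
  exact (a _).le_of_opNorm_le (hM t (Ioc_subset_Icc_self (uIoc_of_le (zero_le_one' ℝ) ▸ ht))) _

variable [CompleteSpace F]

theorem contDiffOn_homotopyPrimitive {n : ℕ∞} (hU : IsOpen U) (hV : IsOpen V)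
    (hVU : ∀ t ∈ Icc (0 : ℝ) 1, ∀ x ∈ V, lineHomotopy R t x ∈ U) (hβ : ContDiffOn ℝ n β U) :
    ContDiffOn ℝ n (homotopyPrimitive R β) V :=
  contDiffOn_intervalIntegral hV (isOpen_homotopyDomain hU)
    (uIcc_prod_subset_homotopyDomain hVU) (contDiffOn_homotopyPrimitive_integrand hβ)

theorem norm_iteratedFDeriv_homotopyPrimitive_le {n : ℕ} {M D : ℝ} (hU : IsOpen U) (hV : IsOpen V)
    (hVU : ∀ t ∈ Icc (0 : ℝ) 1, ∀ x ∈ V, lineHomotopy R t x ∈ U) (hβ : ContDiffOn ℝ n β U)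
    (hM : ∀ y ∈ U, ∀ i ≤ n, ‖iteratedFDeriv ℝ i β y‖ ≤ M) (hR : ‖R‖ ≤ 1)
    (hT : ‖ContinuousLinearMap.id ℝ E - R‖ ≤ D) (hx : x ∈ V) (hTx : ‖x - R x‖ ≤ D) :
    ‖iteratedFDeriv ℝ n (homotopyPrimitive R β) x‖ ≤ 2 ^ n * (M * D) := by
  have hiter := iteratedFDeriv_intervalIntegral hV (isOpen_homotopyDomain (R := R) hU)
    (uIcc_prod_subset_homotopyDomain hVU) (contDiffOn_homotopyPrimitive_integrand hβ) le_rfl hx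
  refine (congrArg norm hiter).trans_le ((intervalIntegral.norm_integral_le_of_norm_le_const
    (C := 2 ^ n * (M * D)) fun t ht => ?_).trans_eq (by simp))
  rw [uIoc_of_le (zero_le_one' ℝ)] at ht
  let L := lineHomotopy R t
  have hL : ‖L‖ ≤ 1 := norm_lineHomotopy_le_one hR (Ioc_subset_Icc_self ht)
  have hLx : L x ∈ U := hVU t (Ioc_subset_Icc_self ht) x hx
  have hβL : ContDiffOn ℝ n (fun y => β (L y)) (L ⁻¹' U) :=
    hβ.comp L.contDiff.contDiffOn fun _ hy => hy
  have hLU : IsOpen (L ⁻¹' U) := hU.preimage L.continuous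
  have happly : ContDiffOn ℝ n (fun y => β (L y) ((ContinuousLinearMap.id ℝ E - R) y)) (L ⁻¹' U) :=
    hβL.clm_apply (ContinuousLinearMap.contDiff _).contDiffOn
  refine (norm_iteratedFDeriv_comp_right_clm_le (happly.contDiffAt (hLU.mem_nhds hLx)) hL).trans ?_
  refine norm_iteratedFDeriv_apply_clm_le hLU hβL hLx hT hTx fun i hi => ?_
  exact (norm_iteratedFDeriv_comp_clm_le hU (hβ.of_le (mod_cast hi)) hL hLx).trans (hM _ hLx i hi)

end Homotopy

section HomotopyFormula

variable {E F : Type*} [NormedAddCommGroup E] [NormedSpace ℝ E] [NormedAddCommGroup F]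
  [NormedSpace ℝ F] {R : E →L[ℝ] E} {U V : Set E} {a : E → E →L[ℝ] F}
  {β : E → E →L[ℝ] E →L[ℝ] F} {t : ℝ} {x : E}

theorem fderiv_antisymm (hU : IsOpen U) (hβ : DifferentiableAt ℝ β x) (hx : x ∈ U)
    (hanti : ∀ x ∈ U, ∀ u v, β x u v = -β x v u) (w u v : E) :
    fderiv ℝ β x w u v = -fderiv ℝ β x w v u := by
  have heval (u v : E) : HasFDerivAt (fun y => β y u v) _ x :=
    (hβ.hasFDerivAt.clm_apply (hasFDerivAt_const u x)).clm_apply (hasFDerivAt_const v x)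
  have heq : (fun y => β y u v) =ᶠ[𝓝 x] fun y => -β y v u := by
    filter_upwards [hU.mem_nhds hx] with y hy using hanti y hy u v
  have hunique := (heval u v).unique ((heval v u).neg.congr_of_eventuallyEq heq)
  simpa using DFunLike.congr_fun hunique w

theorem hasFDerivAt_homotopyPotential_integrand (ha : DifferentiableAt ℝ a (lineHomotopy R t x)) :
    HasFDerivAt (fun y => a (lineHomotopy R t y) (y - R y))
      (((fderiv ℝ a (lineHomotopy R t x)).flip (x - R x)).comp (lineHomotopy R t) +
        (a (lineHomotopy R t x)).comp (ContinuousLinearMap.id ℝ E - R)) x := by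
  have h := (ha.hasFDerivAt.comp x (lineHomotopy R t).hasFDerivAt).clm_apply
    (ContinuousLinearMap.id ℝ E - R).hasFDerivAt
  exact h.congr_fderiv (by ext; simp [add_comm])

theorem hasDerivAt_apply_lineHomotopy (ha : DifferentiableAt ℝ a (lineHomotopy R t x)) (v : E) :
    HasDerivAt (fun s => a (lineHomotopy R s x) (lineHomotopy R s v))
      (fderiv ℝ a (lineHomotopy R t x) (x - R x) (lineHomotopy R t v)
        + a (lineHomotopy R t x) (v - R v)) t := by
  have hcomp : HasDerivAt (fun s => a (lineHomotopy R s x))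
      (fderiv ℝ a (lineHomotopy R t x) (x - R x)) t :=
    ha.hasFDerivAt.comp_hasDerivAt t (hasDerivAt_lineHomotopy_apply R t x)
  exact hcomp.clm_apply (hasDerivAt_lineHomotopy_apply R t v)

theorem hasDerivAt_apply_apply_lineHomotopy (hβ : DifferentiableAt ℝ β (lineHomotopy R t x))
    (u v : E) :
    HasDerivAt (fun s => β (lineHomotopy R s x) (lineHomotopy R s u) (lineHomotopy R s v))
      (fderiv ℝ β (lineHomotopy R t x) (x - R x) (lineHomotopy R t u) (lineHomotopy R t v)
        + β (lineHomotopy R t x) (u - R u) (lineHomotopy R t v)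
        + β (lineHomotopy R t x) (lineHomotopy R t u) (v - R v)) t := by
  have happly := hasDerivAt_apply_lineHomotopy hβ u
  exact happly.clm_apply (hasDerivAt_lineHomotopy_apply R t v)

theorem hasFDerivAt_homotopyPrimitive_integrand
    (hβ : DifferentiableAt ℝ β (lineHomotopy R t x)) :
    HasFDerivAt (fun y => (β (lineHomotopy R t y) (y - R y)).comp (lineHomotopy R t))
      (((ContinuousLinearMap.compL ℝ E E F).flip (lineHomotopy R t)).comp
        (((fderiv ℝ β (lineHomotopy R t x)).flip (x - R x)).comp (lineHomotopy R t) +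
        (β (lineHomotopy R t x)).comp (ContinuousLinearMap.id ℝ E - R))) x :=
  ((ContinuousLinearMap.compL ℝ E E F).flip (lineHomotopy R t)).hasFDerivAt.comp x
    (hasFDerivAt_homotopyPotential_integrand hβ)

theorem hasDerivAt_apply_apply_lineHomotopy_of_isClosedTwoFormOn (hU : IsOpen U)
    (hβ : DifferentiableOn ℝ β U) (hclosed : IsClosedTwoFormOn β U) (hx : lineHomotopy R t x ∈ U)
    (u v : E) :
    HasDerivAt (fun s => β (lineHomotopy R s x) (lineHomotopy R s u) (lineHomotopy R s v))
      (fderiv ℝ (fun y => (β (lineHomotopy R t y) (y - R y)).comp (lineHomotopy R t)) x u v -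
        fderiv ℝ (fun y => (β (lineHomotopy R t y) (y - R y)).comp (lineHomotopy R t)) x v u)
      t := by
  have hdiff := hβ.differentiableAt (hU.mem_nhds hx)
  refine (hasDerivAt_apply_apply_lineHomotopy hdiff u v).congr_deriv ?_
  have hcl := hclosed.closed _ hx (lineHomotopy R t u) (x - R x) (lineHomotopy R t v)
  have hswap := fderiv_antisymm hU hdiff hx hclosed.antisymm (lineHomotopy R t v)
    (lineHomotopy R t u) (x - R x)
  have hanti := hclosed.antisymm _ hx (lineHomotopy R t u) (v - R v)
  have happly (u v : E) :
      fderiv ℝ (fun y => (β (lineHomotopy R t y) (y - R y)).comp (lineHomotopy R t)) x u v =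
        fderiv ℝ β (lineHomotopy R t x) (lineHomotopy R t u) (x - R x) (lineHomotopy R t v) +
          β (lineHomotopy R t x) (u - R u) (lineHomotopy R t v) := by
    rw [(hasFDerivAt_homotopyPrimitive_integrand hdiff).fderiv]
    rfl
  rw [happly, happly]
  linear_combination (norm := module) (-1 : ℝ) • hcl + hswap + hanti

theorem hasDerivAt_apply_lineHomotopy_of_isPrimitiveOn (hU : IsOpen U)
    (ha : DifferentiableOn ℝ a U) (hda : IsPrimitiveOn a β U) (hx : lineHomotopy R t x ∈ U)
    (v : E) :
    HasDerivAt (fun s => a (lineHomotopy R s x) (lineHomotopy R s v))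
      (fderiv ℝ (fun y => a (lineHomotopy R t y) (y - R y)) x v +
        β (lineHomotopy R t x) (x - R x) (lineHomotopy R t v)) t := by
  have hdiff := ha.differentiableAt (hU.mem_nhds hx)
  refine (hasDerivAt_apply_lineHomotopy hdiff v).congr_deriv ?_
  rw [(hasFDerivAt_homotopyPotential_integrand hdiff).fderiv, ← hda _ hx]
  change _ = fderiv ℝ a (lineHomotopy R t x) (lineHomotopy R t v) (x - R x) +
    a (lineHomotopy R t x) (v - R v) + _
  abel

theorem intervalIntegral_apply_sub_apply_swap [CompleteSpace F] {A : ℝ → E →L[ℝ] E →L[ℝ] F}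
    {c d : ℝ} (hA : ContinuousOn A (uIcc c d)) (u v : E) :
    (∫ t in c..d, A t) u v - (∫ t in c..d, A t) v u = ∫ t in c..d, (A t u v - A t v u) := by
  have happly (u : E) : ContinuousOn (A · u) (uIcc c d) := hA.clm_apply continuousOn_const
  have happly₂ (u v : E) : ContinuousOn (A · u v) (uIcc c d) :=
    (happly u).clm_apply continuousOn_const
  have hintegral (u v : E) : (∫ t in c..d, A t) u v = ∫ t in c..d, A t u v := by
    rw [ContinuousLinearMap.intervalIntegral_apply hA.intervalIntegrable u,
      ContinuousLinearMap.intervalIntegral_apply (happly u).intervalIntegrable v]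
  rw [hintegral, hintegral,
    integral_sub (happly₂ u v).intervalIntegrable (happly₂ v u).intervalIntegrable]

variable [CompleteSpace F]

theorem fderiv_homotopyPrimitive_sub_swap (hU : IsOpen U) (hV : IsOpen V)
    (hVU : ∀ t ∈ Icc (0 : ℝ) 1, ∀ x ∈ V, lineHomotopy R t x ∈ U) (hβ : ContDiffOn ℝ 1 β U)
    (hclosed : IsClosedTwoFormOn β U) (hx : x ∈ V) (u v : E) :
    fderiv ℝ (homotopyPrimitive R β) x u v - fderiv ℝ (homotopyPrimitive R β) x v u =
      β x u v - β (R x) (R u) (R v) := by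
  have hsub := uIcc_prod_subset_homotopyDomain hVU
  have hsmooth := contDiffOn_homotopyPrimitive_integrand (R := R) hβ
  let A (t : ℝ) : E →L[ℝ] E →L[ℝ] F :=
    fderiv ℝ (fun y => (β (lineHomotopy R t y) (y - R y)).comp (lineHomotopy R t)) x
  have hA : ContinuousOn A (uIcc 0 1) :=
    continuousOn_slice (continuousOn_fderiv_slice (isOpen_homotopyDomain hU) hsub hsmooth) hx
  have happly (u v : E) : ContinuousOn (A · u v) (uIcc 0 1) :=
    (hA.clm_apply continuousOn_const).clm_apply continuousOn_const
  have hderiv (t : ℝ) (ht : t ∈ uIcc (0 : ℝ) 1) :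
      HasDerivAt (fun s => β (lineHomotopy R s x) (lineHomotopy R s u) (lineHomotopy R s v))
        (A t u v - A t v u) t :=
    hasDerivAt_apply_apply_lineHomotopy_of_isClosedTwoFormOn hU
      (hβ.differentiableOn one_ne_zero) hclosed (hVU t (uIcc_of_le (zero_le_one' ℝ) ▸ ht) x hx) u v
  calc
    _ = (∫ t in (0 : ℝ)..1, A t) u v - (∫ t in (0 : ℝ)..1, A t) v u := by
      have hderiv := hasFDerivAt_intervalIntegral hV (isOpen_homotopyDomain hU) hsub hsmooth hx
      exact congrArg (fun B => B u v - B v u) hderiv.fderiv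
    _ = ∫ t in (0 : ℝ)..1, (A t u v - A t v u) := intervalIntegral_apply_sub_apply_swap hA u v
    _ = β (lineHomotopy R 1 x) (lineHomotopy R 1 u) (lineHomotopy R 1 v) -
          β (lineHomotopy R 0 x) (lineHomotopy R 0 u) (lineHomotopy R 0 v) :=
      integral_eq_sub_of_hasDerivAt hderiv ((happly u v).sub (happly v u)).intervalIntegrable
    _ = β x u v - β (R x) (R u) (R v) := by
      simp only [lineHomotopy_one, lineHomotopy_zero, ContinuousLinearMap.id_apply]

theorem hasFDerivAt_homotopyPotential (hU : IsOpen U) (hV : IsOpen V)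
    (hVU : ∀ t ∈ Icc (0 : ℝ) 1, ∀ x ∈ V, lineHomotopy R t x ∈ U) (ha : ContDiffOn ℝ 1 a U)
    (hβ : ContinuousOn β U) (hda : IsPrimitiveOn a β U) (hx : x ∈ V) :
    HasFDerivAt (homotopyPotential R a) (a x - (a (R x)).comp R - homotopyPrimitive R β x) x := by
  have hW := isOpen_homotopyDomain (R := R) hU
  have hsub := uIcc_prod_subset_homotopyDomain hVU
  have hsmooth := contDiffOn_homotopyPotential_integrand (R := R) ha
  let A (t : ℝ) : E →L[ℝ] F := fderiv ℝ (fun y => a (lineHomotopy R t y) (y - R y)) x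
  let B (t : ℝ) : E →L[ℝ] F := (β (lineHomotopy R t x) (x - R x)).comp (lineHomotopy R t)
  have hA : ContinuousOn A (uIcc 0 1) :=
    continuousOn_slice (continuousOn_fderiv_slice hW hsub hsmooth) hx
  have hB : ContinuousOn B (uIcc 0 1) :=
    continuousOn_slice ((contDiffOn_homotopyPrimitive_integrand
      (contDiffOn_zero.2 hβ)).continuousOn.mono hsub) hx
  have hAB : IntervalIntegrable (fun t => A t + B t) volume 0 1 := (hA.add hB).intervalIntegrable
  have hderiv (v : E) (t : ℝ) (ht : t ∈ uIcc (0 : ℝ) 1) :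
      HasDerivAt (fun s => a (lineHomotopy R s x) (lineHomotopy R s v)) (A t v + B t v) t :=
    hasDerivAt_apply_lineHomotopy_of_isPrimitiveOn hU (ha.differentiableOn one_ne_zero) hda
      (hVU t (uIcc_of_le (zero_le_one' ℝ) ▸ ht) x hx) v
  refine (hasFDerivAt_intervalIntegral hV hW hsub hsmooth hx).congr_fderiv ?_
  refine eq_sub_iff_add_eq.2 ((integral_add hA.intervalIntegrable hB.intervalIntegrable).symm.trans
    (ContinuousLinearMap.ext fun v => ?_))
  calc
    (∫ t in (0 : ℝ)..1, (A t + B t)) v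
      = ∫ t in (0 : ℝ)..1, (A t v + B t v) := ContinuousLinearMap.intervalIntegral_apply hAB v
    _ = a (lineHomotopy R 1 x) (lineHomotopy R 1 v) -
          a (lineHomotopy R 0 x) (lineHomotopy R 0 v) :=
      integral_eq_sub_of_hasDerivAt (hderiv v)
        ((hA.add hB).clm_apply continuousOn_const).intervalIntegrable
    _ = (a x - (a (R x)).comp R) v := by
      rw [lineHomotopy_one, lineHomotopy_zero]
      rfl

end HomotopyFormula

section RadialPrimitive

variable {E F : Type*} [NormedAddCommGroup E] [NormedSpace ℝ E] [NormedAddCommGroup F]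
  [NormedSpace ℝ F] {U : Set E} {a : E → E →L[ℝ] F} {β : E → E →L[ℝ] E →L[ℝ] F} {f : E → F}
  {P : Submodule ℝ E} {x v : E} {t : ℝ}

theorem isPrimitiveOn_sub_fderiv (hU : IsOpen U) (ha : DifferentiableOn ℝ a U)
    (hda : IsPrimitiveOn a β U) (hf : ContDiffOn ℝ 2 f U) :
    IsPrimitiveOn (fun x => a x - fderiv ℝ f x) β U := by
  intro x hx u v
  have hfx : ContDiffAt ℝ 2 f x := hf.contDiffAt (hU.mem_nhds hx)
  have hdf : DifferentiableAt ℝ (fderiv ℝ f) x :=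
    (hfx.fderiv_right (m := 1) one_add_one_eq_two.le).differentiableAt one_ne_zero
  have hsymm : IsSymmSndFDerivAt ℝ f x := hfx.isSymmSndFDerivAt (by simp)
  rw [fderiv_fun_sub (ha.differentiableAt (hU.mem_nhds hx)) hdf, ← hda x hx]
  simp only [sub_apply, hsymm.eq u v]
  abel

theorem lineHomotopy_zero_left_mem (hs : StarConvex ℝ 0 U) (ht : t ∈ Icc (0 : ℝ) 1) (hx : x ∈ U) :
    lineHomotopy 0 t x ∈ U := by
  simpa [lineHomotopy_apply] using hs.smul_mem hx ht.1 ht.2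

theorem homotopyPrimitive_zero_left_apply_eq_zero [CompleteSpace F] (hs : StarConvex ℝ 0 U)
    (hβ : ContinuousOn β U) (hβP : ∀ x ∈ U, x ∈ P → ∀ u ∈ P, ∀ v ∈ P, β x u v = 0) (hx : x ∈ U)
    (hxP : x ∈ P) (hvP : v ∈ P) : homotopyPrimitive 0 β x v = 0 := by
  have hsub := uIcc_prod_subset_homotopyDomain fun t ht x hx =>
    lineHomotopy_zero_left_mem (t := t) (x := x) hs ht hx
  have hcont := continuousOn_slice ((contDiffOn_homotopyPrimitive_integrand
    (contDiffOn_zero.2 hβ)).continuousOn.mono hsub) hx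
  rw [homotopyPrimitive, ContinuousLinearMap.intervalIntegral_apply hcont.intervalIntegrable]
  refine (integral_congr fun t ht => ?_).trans integral_zero
  rw [uIcc_of_le (zero_le_one' ℝ)] at ht
  refine hβP _ (lineHomotopy_zero_left_mem hs ht hx) ?_ _ ?_ _ ?_ <;>
    simp [lineHomotopy_apply, P.smul_mem, hxP, hvP]

theorem norm_le_diam_of_starConvex (hb : Bornology.IsBounded U) (hs : StarConvex ℝ 0 U)
    (hx : x ∈ U) : ‖x‖ ≤ Metric.diam U := by
  have hzero : (0 : E) ∈ U := by simpa using hs.smul_mem hx le_rfl zero_le_one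
  simpa using Metric.dist_le_diam_of_mem hb hx hzero

end RadialPrimitive

section NormalCorrection

variable {E F : Type*} [NormedAddCommGroup E] [InnerProductSpace ℝ E] [NormedAddCommGroup F]
  [NormedSpace ℝ F] {U : Set E} {a : E → E →L[ℝ] F} {β : E → E →L[ℝ] E →L[ℝ] F}
  {P : Submodule ℝ E} [P.HasOrthogonalProjection] {x : E} {n : ℕ} {M D : ℝ}

/-- The `1`-form `a - d(a(·)(Q ·))`, where `Q` is the projection normal to `P`. Along `P`, the
exact term removes the normal components of `a` at the cost of one derivative. -/
noncomputable def normalCorrection (P : Submodule ℝ E) [P.HasOrthogonalProjection]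
    (a : E → E →L[ℝ] F) (x : E) : E →L[ℝ] F :=
  a x - fderiv ℝ (fun y => a y (Pᗮ.starProjection y)) x

theorem contDiffOn_apply_starProjection {n : ℕ∞ω} (ha : ContDiffOn ℝ n a U) :
    ContDiffOn ℝ n (fun y => a y (Pᗮ.starProjection y)) U :=
  ha.clm_apply (ContinuousLinearMap.contDiff _).contDiffOn

theorem contDiffOn_fderiv_apply_starProjection {n : ℕ∞ω} (hU : IsOpen U)
    (ha : ContDiffOn ℝ (n + 1) a U) :
    ContDiffOn ℝ n (fderiv ℝ fun y => a y (Pᗮ.starProjection y)) U :=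
  (contDiffOn_apply_starProjection ha).fderiv_of_isOpen hU le_rfl

theorem contDiffOn_normalCorrection {n : ℕ∞ω} (hU : IsOpen U) (ha : ContDiffOn ℝ (n + 1) a U) :
    ContDiffOn ℝ n (normalCorrection P a) U :=
  (ha.of_le le_self_add).sub (contDiffOn_fderiv_apply_starProjection hU ha)

theorem isPrimitiveOn_normalCorrection (hU : IsOpen U) (ha : ContDiffOn ℝ 2 a U)
    (hda : IsPrimitiveOn a β U) : IsPrimitiveOn (normalCorrection P a) β U :=
  isPrimitiveOn_sub_fderiv hU (ha.differentiableOn two_ne_zero) hda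
    (contDiffOn_apply_starProjection ha)

theorem normalCorrection_eq_zero (ha : DifferentiableAt ℝ a x) (hx : x ∈ P)
    (haP : ∀ v ∈ P, a x v = 0) : normalCorrection P a x = 0 := by
  have hQx : Pᗮ.starProjection x = 0 :=
    P.starProjection_orthogonal_apply_eq_zero hx
  have hderiv := ha.hasFDerivAt.clm_apply (Pᗮ.starProjection.hasFDerivAt (x := x))
  ext v
  have htangent := haP _ (P.starProjection_apply_mem v)
  rw [normalCorrection, hderiv.fderiv, hQx]
  simpa [P.starProjection_orthogonal_val, sub_eq_zero] using htangent

theorem norm_iteratedFDeriv_normalCorrection_le (hU : IsOpen U) (ha : ContDiffOn ℝ (n + 1) a U)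
    (hD : 1 ≤ D) (hx : x ∈ U) (hxD : ‖x‖ ≤ D)
    (hM : ∀ i ≤ n + 1, ‖iteratedFDeriv ℝ i a x‖ ≤ M) :
    ‖iteratedFDeriv ℝ n (normalCorrection P a) x‖ ≤ M + 2 ^ (n + 1) * (M * D) := by
  have hdf := contDiffOn_fderiv_apply_starProjection (P := P) hU ha
  have hsub : iteratedFDeriv ℝ n (normalCorrection P a) x =
      iteratedFDeriv ℝ n a x -
        iteratedFDeriv ℝ n (fderiv ℝ fun y => a y (Pᗮ.starProjection y)) x :=
    iteratedFDeriv_sub_apply ((ha.of_le le_self_add).contDiffAt (hU.mem_nhds hx))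
      (hdf.contDiffAt (hU.mem_nhds hx))
  rw [hsub]
  refine (norm_sub_le _ _).trans (add_le_add (hM n n.le_succ) ?_)
  rw [norm_iteratedFDeriv_fderiv]
  exact norm_iteratedFDeriv_apply_clm_le hU (mod_cast ha) hx (Pᗮ.starProjection_norm_le.trans hD)
    ((Pᗮ.norm_starProjection_apply_le x).trans hxD) hM

end NormalCorrection

theorem hasCompactSupport_deriv_smoothTransition :
    HasCompactSupport (deriv Real.smoothTransition) := by
  refine HasCompactSupport.intro (isCompact_Icc (a := (0 : ℝ)) (b := 1)) fun r hr => ?_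
  have hconst : ∃ c, Real.smoothTransition =ᶠ[𝓝 r] fun _ => c := by
    rcases lt_or_ge r 0 with hneg | hnonneg
    · exact ⟨0, (gt_mem_nhds hneg).mono fun _ h => Real.smoothTransition.zero_of_nonpos h.le⟩
    · have hone : 1 < r := not_le.1 fun hle => hr ⟨hnonneg, hle⟩
      exact ⟨1, (lt_mem_nhds hone).mono fun _ h => Real.smoothTransition.one_of_one_le h.le⟩
  obtain ⟨c, hc⟩ := hconst
  rw [hc.deriv_eq, deriv_const]

theorem exists_norm_deriv_smoothTransition_le :
    ∃ K, ∀ r, ‖deriv Real.smoothTransition r‖ ≤ K :=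
  hasCompactSupport_deriv_smoothTransition.exists_bound_of_continuous
    ((Real.smoothTransition.contDiff (n := 1)).continuous_deriv le_rfl)

section Ratio

variable {E H : Type*} [NormedAddCommGroup E] [NormedSpace ℝ E] [NormedAddCommGroup H]
  [InnerProductSpace ℝ H] {p : E → H} {q : E → ℝ} {p' : E →L[ℝ] H} {q' : E →L[ℝ] ℝ} {x : E}

theorem hasFDerivAt_sq_div_norm_sq_add_sq (hp : HasFDerivAt p p' x) (hq : HasFDerivAt q q' x)
    (hpos : 0 < ‖p x‖ ^ 2 + q x ^ 2) :
    HasFDerivAt (fun y => q y ^ 2 / (‖p y‖ ^ 2 + q y ^ 2))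
      ((2 * q x / (‖p x‖ ^ 2 + q x ^ 2) ^ 2) •
        (‖p x‖ ^ 2 • q' - q x • (innerSL ℝ (p x)).comp p')) x := by
  have hnum := hq.pow 2
  have hden := hp.norm_sq.add hnum
  have hinv := (hasDerivAt_inv hpos.ne').comp_hasFDerivAt x hden
  refine (hnum.mul hinv).congr_fderiv ?_
  ext v
  simp only [Nat.add_one_sub_one, pow_one, nsmul_eq_mul, Nat.cast_ofNat, smul_add, neg_smul,
    smul_neg, comp_apply, Pi.add_apply, add_apply, neg_apply, smul_apply,
    ContinuousLinearMap.comp_apply, coe_innerSL_apply, smul_eq_mul, sub_apply]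
  field_simp
  ring

theorem norm_mul_norm_fderiv_sq_div_norm_sq_add_sq_le (hp : HasFDerivAt p p' x)
    (hq : HasFDerivAt q q' x) (hp' : ‖p'‖ ≤ 1) (hq' : ‖q'‖ ≤ 1) (hpos : 0 < ‖p x‖ ^ 2 + q x ^ 2) :
    ‖p x‖ * ‖fderiv ℝ (fun y => q y ^ 2 / (‖p y‖ ^ 2 + q y ^ 2)) x‖ ≤ 2 := by
  rw [(hasFDerivAt_sq_div_norm_sq_add_sq hp hq hpos).fderiv, norm_smul]
  have hinner : ‖(innerSL ℝ (p x)).comp p'‖ ≤ ‖p x‖ :=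
    (ContinuousLinearMap.opNorm_comp_le _ _).trans
      ((innerSL_apply_norm ℝ (p x)).symm ▸ mul_le_of_le_one_right (norm_nonneg _) hp')
  have hdiff : ‖‖p x‖ ^ 2 • q' - q x • (innerSL ℝ (p x)).comp p'‖ ≤
      ‖p x‖ ^ 2 * 1 + |q x| * ‖p x‖ := by
    refine (norm_sub_le _ _).trans ?_
    rw [norm_smul, norm_smul, Real.norm_of_nonneg (sq_nonneg _), Real.norm_eq_abs]
    gcongr
  calc
    _ ≤ ‖p x‖ * (2 * |q x| / (‖p x‖ ^ 2 + q x ^ 2) ^ 2 * (‖p x‖ ^ 2 * 1 + |q x| * ‖p x‖)) := by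
      gcongr
      simp
    _ = 2 * (‖p x‖ * |q x| * (‖p x‖ ^ 2 + ‖p x‖ * |q x|)) / (‖p x‖ ^ 2 + q x ^ 2) ^ 2 := by ring
    _ ≤ 2 := by
      rw [div_le_iff₀ (by positivity)]
      have hprod : ‖p x‖ * |q x| ≤ (‖p x‖ ^ 2 + q x ^ 2) / 2 := by
        nlinarith [sq_nonneg (‖p x‖ - |q x|), sq_abs (q x)]
      have hsum : ‖p x‖ ^ 2 + ‖p x‖ * |q x| ≤ 2 * (‖p x‖ ^ 2 + q x ^ 2) := by
        nlinarith [sq_nonneg (‖p x‖), sq_nonneg (q x)]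
      have := mul_le_mul hprod hsum (by positivity) (by positivity)
      linarith

end Ratio

section Tube

variable {E : Type*} [NormedAddCommGroup E] [InnerProductSpace ℝ E] {P : Submodule ℝ E}
  [P.HasOrthogonalProjection] {s : E → ℝ} {U : Set E} {x : E} {t K : ℝ}

/-- A nonnegative `C²` function which is positive exactly on `U`. Being `1`-Lipschitz, it bounds the
distance to the complement of `U` from below. -/
structure IsLipschitzDefiningFunction (s : E → ℝ) (U : Set E) : Prop where
  contDiff : ContDiff ℝ 2 s
  nonneg : ∀ x, 0 ≤ s x
  support_eq : support s = U
  lipschitz : LipschitzWith 1 s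

/-- The points whose distance to `P` is less than the value of `s` at their foot in `P`. When `s` is
a Lipschitz defining function of `U`, this is a neighbourhood of `P ∩ U` in `U` which retracts onto
it along normal segments. -/
def tube (P : Submodule ℝ E) [P.HasOrthogonalProjection] (s : E → ℝ) : Set E :=
  {x | ‖Pᗮ.starProjection x‖ < s (P.starProjection x)}

/-- With `p` the distance to `P` and `q` the value of `s` at the foot in `P`, this is
`q² / (p² + q²)`: it is `1` on `P ∩ U` and at most `1 / 2` outside `tube P s`. On `P` outside `U` it
is `0 / 0 = 0`. -/
noncomputable def tubeRatio (P : Submodule ℝ E) [P.HasOrthogonalProjection] (s : E → ℝ) (x : E) :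
    ℝ :=
  s (P.starProjection x) ^ 2 / (‖Pᗮ.starProjection x‖ ^ 2 + s (P.starProjection x) ^ 2)

/-- A cutoff function of `tube P s`: it is `1` on `P ∩ U` and vanishes where
`tubeRatio P s ≤ 3 / 4`, in particular near each point of `U` outside the tube. -/
noncomputable def tubeCutoff (P : Submodule ℝ E) [P.HasOrthogonalProjection] (s : E → ℝ) (x : E) :
    ℝ :=
  Real.smoothTransition (4 * tubeRatio P s x - 3)

theorem exists_isLipschitzDefiningFunction [FiniteDimensional ℝ E] (hU : IsOpen U)
    (hb : Bornology.IsBounded U) : ∃ s, IsLipschitzDefiningFunction s U := by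
  obtain ⟨f, hsupp, hf, hrange⟩ := hU.exists_contDiff_support_eq (n := 2)
  have hcompact : HasCompactSupport f := by
    rw [HasCompactSupport, tsupport, hsupp]
    exact hb.isCompact_closure
  obtain ⟨C, hC⟩ := (hf.of_le one_le_two).lipschitzWith_of_hasCompactSupport hcompact one_ne_zero
  have hpos : 0 < (C + 1 : ℝ) := by positivity
  refine ⟨fun x => (C + 1 : ℝ)⁻¹ * f x, contDiff_const.mul hf, fun x => ?_, ?_, ?_⟩
  · exact mul_nonneg (inv_nonneg.2 hpos.le) (hrange ⟨x, rfl⟩).1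
  · rw [← hsupp]
    ext x
    simp [hpos.ne']
  · refine LipschitzWith.of_dist_le_mul fun x y => ?_
    rw [Real.dist_eq, ← mul_sub, abs_mul, abs_of_pos (inv_pos.2 hpos), inv_mul_le_iff₀ hpos,
      ← Real.dist_eq, NNReal.coe_one, one_mul]
    exact (hC.dist_le_mul x y).trans (by gcongr; exact le_add_of_nonneg_right zero_le_one)

namespace IsLipschitzDefiningFunction

variable (hs : IsLipschitzDefiningFunction s U)
include hs

theorem mem_of_pos (hx : 0 < s x) : x ∈ U := hs.support_eq ▸ mem_support.2 hx.ne'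

theorem pos_of_mem (hx : x ∈ U) : 0 < s x :=
  (hs.nonneg x).lt_of_ne' (mem_support.1 (hs.support_eq.symm ▸ hx))

theorem norm_fderiv_le : ‖fderiv ℝ s x‖ ≤ 1 := by
  simpa using norm_fderiv_le_of_lipschitz ℝ hs.lipschitz

theorem isOpen_tube : IsOpen (tube P s) :=
  isOpen_lt Pᗮ.starProjection.continuous.norm
    (hs.contDiff.continuous.comp P.starProjection.continuous)

theorem lineHomotopy_mem (ht : t ∈ Icc (0 : ℝ) 1) (hx : x ∈ tube P s) :
    lineHomotopy P.starProjection t x ∈ U := by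
  apply hs.mem_of_pos
  have hdist : dist (P.starProjection x) (lineHomotopy P.starProjection t x) ≤
      ‖Pᗮ.starProjection x‖ := by
    have hdiff : P.starProjection x - lineHomotopy P.starProjection t x =
        -(t • Pᗮ.starProjection x) := by
      rw [lineHomotopy_apply, P.starProjection_orthogonal_val]
      module
    rw [dist_eq_norm, hdiff, norm_neg, norm_smul, Real.norm_of_nonneg ht.1]
    exact mul_le_of_le_one_left (norm_nonneg _) ht.2
  have hlip := (le_abs_self _).trans (hs.lipschitz.dist_le_mul (P.starProjection x)
    (lineHomotopy P.starProjection t x))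
  rw [NNReal.coe_one, one_mul] at hlip
  have htube : ‖Pᗮ.starProjection x‖ < s (P.starProjection x) := hx
  linarith

theorem tube_subset : tube P s ⊆ U := fun x hx => by
  simpa [lineHomotopy_one] using hs.lineHomotopy_mem (right_mem_Icc.2 zero_le_one) hx

theorem starProjection_mem (hx : x ∈ tube P s) : P.starProjection x ∈ U :=
  hs.mem_of_pos ((norm_nonneg _).trans_lt hx)

theorem mem_tube (hx : x ∈ U) (hxP : x ∈ P) : x ∈ tube P s := by
  rw [tube, mem_ofPred_eq, P.starProjection_orthogonal_apply_eq_zero hxP,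
    P.starProjection_eq_self_iff.2 hxP, norm_zero]
  exact hs.pos_of_mem hx

theorem norm_sq_add_sq_pos (hx : x ∈ U) :
    0 < ‖Pᗮ.starProjection x‖ ^ 2 + s (P.starProjection x) ^ 2 := by
  by_cases hxP : Pᗮ.starProjection x = 0
  · have hself : P.starProjection x = x := by
      rwa [P.starProjection_orthogonal_val, sub_eq_zero, eq_comm] at hxP
    have := hs.pos_of_mem hx
    rw [hself]
    positivity
  · positivity

theorem contDiffOn_tubeRatio : ContDiffOn ℝ 2 (tubeRatio P s) U := by
  have hfoot : ContDiff ℝ 2 fun x => s (P.starProjection x) ^ 2 :=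
    (hs.contDiff.comp P.starProjection.contDiff).pow 2
  exact hfoot.contDiffOn.div
    ((Pᗮ.starProjection.contDiff.norm_sq ℝ).add hfoot).contDiffOn
    fun x hx => (hs.norm_sq_add_sq_pos hx).ne'

theorem contDiffOn_tubeCutoff : ContDiffOn ℝ 2 (tubeCutoff P s) U :=
  (Real.smoothTransition.contDiff (n := 2)).comp_contDiffOn
    ((contDiffOn_const.mul hs.contDiffOn_tubeRatio).sub contDiffOn_const)

theorem tubeCutoff_eq_one (hx : x ∈ U) (hxP : x ∈ P) : tubeCutoff P s x = 1 := by
  refine Real.smoothTransition.one_of_one_le ?_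
  have hpos := hs.pos_of_mem hx
  rw [tubeRatio, P.starProjection_orthogonal_apply_eq_zero hxP,
    P.starProjection_eq_self_iff.2 hxP, norm_zero, zero_pow two_ne_zero, zero_add,
    div_self (by positivity)]
  norm_num

theorem tubeRatio_le_half (hx : x ∈ U) (hxV : x ∉ tube P s) : tubeRatio P s x ≤ 1 / 2 := by
  rw [tubeRatio, div_le_iff₀ (hs.norm_sq_add_sq_pos hx)]
  have hsq := pow_le_pow_left₀ (hs.nonneg _) (not_lt.1 hxV) 2
  linarith

theorem tubeCutoff_eventuallyEq_zero (hU : IsOpen U) (hx : x ∈ U) (hxV : x ∉ tube P s) :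
    tubeCutoff P s =ᶠ[𝓝 x] fun _ => 0 := by
  have hcont := hs.contDiffOn_tubeRatio (P := P).continuousOn.continuousAt (hU.mem_nhds hx)
  have hlt : tubeRatio P s x < 3 / 4 := (hs.tubeRatio_le_half hx hxV).trans_lt (by norm_num)
  filter_upwards [hcont.eventually_lt_const hlt] with y hy
  exact Real.smoothTransition.zero_of_nonpos (by linarith)

theorem norm_mul_norm_fderiv_tubeRatio_le (hx : x ∈ U) :
    ‖Pᗮ.starProjection x‖ * ‖fderiv ℝ (tubeRatio P s) x‖ ≤ 2 := by
  have hfoot := ((hs.contDiff.differentiable two_ne_zero) (P.starProjection x)).hasFDerivAt.comp x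
    P.starProjection.hasFDerivAt
  refine norm_mul_norm_fderiv_sq_div_norm_sq_add_sq_le Pᗮ.starProjection.hasFDerivAt hfoot
    Pᗮ.starProjection_norm_le ?_ (hs.norm_sq_add_sq_pos hx)
  exact (ContinuousLinearMap.opNorm_comp_le _ _).trans
    (mul_le_one₀ hs.norm_fderiv_le (norm_nonneg _) P.starProjection_norm_le)

theorem norm_mul_norm_fderiv_tubeCutoff_le (hU : IsOpen U)
    (hK : ∀ r, ‖deriv Real.smoothTransition r‖ ≤ K) (hx : x ∈ U) :
    ‖Pᗮ.starProjection x‖ * ‖fderiv ℝ (tubeCutoff P s) x‖ ≤ 8 * K := by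
  have hratio := ((hs.contDiffOn_tubeRatio (P := P)).differentiableOn two_ne_zero).differentiableAt
    (hU.mem_nhds hx)
  have htransition := ((Real.smoothTransition.contDiff (n := 1)).differentiable one_ne_zero)
    (4 * tubeRatio P s x - 3)
  have hcutoff : HasFDerivAt (tubeCutoff P s) _ x :=
    htransition.hasDerivAt.comp_hasFDerivAt x ((hratio.hasFDerivAt.const_mul 4).sub_const 3)
  rw [hcutoff.fderiv, norm_smul, norm_smul, Real.norm_of_nonneg zero_le_four]
  have hK0 := (norm_nonneg _).trans (hK 0)
  calc
    _ = 4 * ‖deriv Real.smoothTransition (4 * tubeRatio P s x - 3)‖ *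
          (‖Pᗮ.starProjection x‖ * ‖fderiv ℝ (tubeRatio P s) x‖) := by ring
    _ ≤ 4 * K * 2 := by
      gcongr
      · exact hK _
      · exact hs.norm_mul_norm_fderiv_tubeRatio_le hx
    _ = 8 * K := by ring

end IsLipschitzDefiningFunction

end Tube

section TubeCorrection

variable {E F : Type*} [NormedAddCommGroup E] [InnerProductSpace ℝ E] [NormedAddCommGroup F]
  [NormedSpace ℝ F] {P : Submodule ℝ E} [P.HasOrthogonalProjection] {s : E → ℝ}
  {U : Set E} {a : E → E →L[ℝ] F} {β : E → E →L[ℝ] E →L[ℝ] F} {x : E} {K A B : ℝ}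

/-- The `1`-form `a - d(χ F)`, where `F` is the potential of `a` along the retraction of
`tube P s` onto `P` and `χ` is the cutoff of the tube. -/
noncomputable def tubeCorrection (P : Submodule ℝ E) [P.HasOrthogonalProjection] (s : E → ℝ)
    (a : E → E →L[ℝ] F) (x : E) : E →L[ℝ] F :=
  a x - fderiv ℝ (fun y => tubeCutoff P s y • homotopyPotential P.starProjection a y) x

namespace IsLipschitzDefiningFunction

variable (hs : IsLipschitzDefiningFunction s U) (hU : IsOpen U)
include hs hU

theorem tubeCorrection_eq_of_notMem_tube (hx : x ∈ U) (hxV : x ∉ tube P s) :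
    tubeCorrection P s a x = a x := by
  have hzero : (fun y => tubeCutoff P s y • homotopyPotential P.starProjection a y) =ᶠ[𝓝 x]
      fun _ => 0 := by
    filter_upwards [hs.tubeCutoff_eventuallyEq_zero hU hx hxV] with y hy
    rw [hy, zero_smul]
  rw [tubeCorrection, hzero.fderiv_eq, fderiv_fun_const, Pi.zero_apply, sub_zero]

variable [CompleteSpace F]

theorem hasFDerivAt_homotopyPotential (ha : ContDiffOn ℝ 1 a U) (hβ : ContinuousOn β U)
    (hda : IsPrimitiveOn a β U) (haP : ∀ x ∈ U, x ∈ P → ∀ v ∈ P, a x v = 0) (hx : x ∈ tube P s) :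
    HasFDerivAt (homotopyPotential P.starProjection a)
      (a x - homotopyPrimitive P.starProjection β x) x := by
  have hfoot : (a (P.starProjection x)).comp P.starProjection = 0 := by
    ext v
    exact haP _ (hs.starProjection_mem hx) (P.starProjection_apply_mem x) _
      (P.starProjection_apply_mem v)
  simpa only [hfoot, sub_zero] using _root_.hasFDerivAt_homotopyPotential hU hs.isOpen_tube
    (fun t ht y hy => hs.lineHomotopy_mem ht hy) ha hβ hda hx

theorem contDiffOn_homotopyPotential (ha : ContDiffOn ℝ 1 a U) (hβ : ContDiffOn ℝ 1 β U)
    (hda : IsPrimitiveOn a β U) (haP : ∀ x ∈ U, x ∈ P → ∀ v ∈ P, a x v = 0) :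
    ContDiffOn ℝ 2 (homotopyPotential P.starProjection a) (tube P s) := by
  have hderiv (x : E) (hx : x ∈ tube P s) :=
    hs.hasFDerivAt_homotopyPotential hU ha hβ.continuousOn hda haP hx
  have hprimitive : ContDiffOn ℝ 1 (homotopyPrimitive P.starProjection β) (tube P s) :=
    contDiffOn_homotopyPrimitive (n := 1) hU hs.isOpen_tube
      (fun t ht x hx => hs.lineHomotopy_mem ht hx) hβ
  rw [← one_add_one_eq_two, contDiffOn_succ_iff_fderiv_of_isOpen hs.isOpen_tube]
  exact ⟨fun x hx => (hderiv x hx).differentiableAt.differentiableWithinAt, by simp,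
    ((ha.mono hs.tube_subset).sub hprimitive).congr fun x hx => (hderiv x hx).fderiv⟩

theorem contDiffOn_tubeCutoff_smul_homotopyPotential (ha : ContDiffOn ℝ 1 a U)
    (hβ : ContDiffOn ℝ 1 β U) (hda : IsPrimitiveOn a β U)
    (haP : ∀ x ∈ U, x ∈ P → ∀ v ∈ P, a x v = 0) :
    ContDiffOn ℝ 2 (fun y => tubeCutoff P s y • homotopyPotential P.starProjection a y) U := by
  intro x hx
  refine ContDiffAt.contDiffWithinAt ?_
  by_cases hxV : x ∈ tube P s
  · exact (hs.contDiffOn_tubeCutoff.contDiffAt (hU.mem_nhds hx)).smul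
      ((hs.contDiffOn_homotopyPotential hU ha hβ hda haP).contDiffAt (hs.isOpen_tube.mem_nhds hxV))
  · refine (contDiffAt_const (c := 0)).congr_of_eventuallyEq ?_
    filter_upwards [hs.tubeCutoff_eventuallyEq_zero hU hx hxV] with y hy
    rw [hy, zero_smul]

theorem contDiffOn_tubeCorrection (ha : ContDiffOn ℝ 1 a U) (hβ : ContDiffOn ℝ 1 β U)
    (hda : IsPrimitiveOn a β U) (haP : ∀ x ∈ U, x ∈ P → ∀ v ∈ P, a x v = 0) :
    ContDiffOn ℝ 1 (tubeCorrection P s a) U :=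
  ha.sub ((hs.contDiffOn_tubeCutoff_smul_homotopyPotential hU ha hβ hda haP).fderiv_of_isOpen hU
    one_add_one_eq_two.le)

theorem isPrimitiveOn_tubeCorrection (ha : ContDiffOn ℝ 1 a U) (hβ : ContDiffOn ℝ 1 β U)
    (hda : IsPrimitiveOn a β U) (haP : ∀ x ∈ U, x ∈ P → ∀ v ∈ P, a x v = 0) :
    IsPrimitiveOn (tubeCorrection P s a) β U :=
  isPrimitiveOn_sub_fderiv hU (ha.differentiableOn one_ne_zero) hda
    (hs.contDiffOn_tubeCutoff_smul_homotopyPotential hU ha hβ hda haP)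

theorem tubeCorrection_eq_of_mem_tube (ha : ContDiffOn ℝ 1 a U) (hβ : ContinuousOn β U)
    (hda : IsPrimitiveOn a β U) (haP : ∀ x ∈ U, x ∈ P → ∀ v ∈ P, a x v = 0) (hx : x ∈ tube P s) :
    tubeCorrection P s a x = a x -
      (tubeCutoff P s x • (a x - homotopyPrimitive P.starProjection β x) +
        (fderiv ℝ (tubeCutoff P s) x).smulRight (homotopyPotential P.starProjection a x)) := by
  have hcutoff : DifferentiableAt ℝ (tubeCutoff P s) x :=
    (hs.contDiffOn_tubeCutoff.differentiableOn two_ne_zero).differentiableAt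
      (hU.mem_nhds (hs.tube_subset hx))
  rw [tubeCorrection, (hcutoff.hasFDerivAt.fun_smul
    (hs.hasFDerivAt_homotopyPotential hU ha hβ hda haP hx)).fderiv]

theorem tubeCorrection_eq_zero (ha : ContDiffOn ℝ 1 a U) (hβ : ContinuousOn β U)
    (hda : IsPrimitiveOn a β U) (haP : ∀ x ∈ U, x ∈ P → ∀ v ∈ P, a x v = 0) (hx : x ∈ U)
    (hxP : x ∈ P) : tubeCorrection P s a x = 0 := by
  have hfixed : P.starProjection x = x := P.starProjection_eq_self_iff.2 hxP
  rw [hs.tubeCorrection_eq_of_mem_tube hU ha hβ hda haP (hs.mem_tube hx hxP),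
    hs.tubeCutoff_eq_one hx hxP]
  simp [homotopyPotential, homotopyPrimitive, hfixed]

theorem norm_tubeCorrection_le (ha : ContDiffOn ℝ 1 a U) (hβ : ContinuousOn β U)
    (hda : IsPrimitiveOn a β U) (haP : ∀ x ∈ U, x ∈ P → ∀ v ∈ P, a x v = 0)
    (hK : ∀ r, ‖deriv Real.smoothTransition r‖ ≤ K) (hA : ∀ y ∈ U, ‖a y‖ ≤ A)
    (hB : ∀ y ∈ tube P s, ‖homotopyPrimitive P.starProjection β y‖ ≤ B) (hB0 : 0 ≤ B) (hx : x ∈ U) :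
    ‖tubeCorrection P s a x‖ ≤ A + (A + B + 8 * K * A) := by
  have hA0 : 0 ≤ A := (norm_nonneg _).trans (hA x hx)
  have hK0 : 0 ≤ K := (norm_nonneg _).trans (hK 0)
  by_cases hxV : x ∈ tube P s
  · have hcutoff : ‖tubeCutoff P s x • (a x - homotopyPrimitive P.starProjection β x)‖ ≤ A + B := by
      rw [norm_smul, tubeCutoff, Real.norm_of_nonneg (Real.smoothTransition.nonneg _)]
      exact (mul_le_of_le_one_left (norm_nonneg _) (Real.smoothTransition.le_one _)).trans
        ((norm_sub_le _ _).trans (add_le_add (hA x hx) (hB x hxV)))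
    have hpotential : ‖homotopyPotential P.starProjection a x‖ ≤ A * ‖Pᗮ.starProjection x‖ :=
      P.starProjection_orthogonal_val x ▸
        norm_homotopyPotential_le fun t ht => hA _ (hs.lineHomotopy_mem ht hxV)
    have hgradient : ‖(fderiv ℝ (tubeCutoff P s) x).smulRight
        (homotopyPotential P.starProjection a x)‖ ≤ 8 * K * A :=
      calc
        _ ≤ ‖fderiv ℝ (tubeCutoff P s) x‖ * (A * ‖Pᗮ.starProjection x‖) := by
          rw [ContinuousLinearMap.norm_smulRight_apply]
          gcongr
        _ = ‖Pᗮ.starProjection x‖ * ‖fderiv ℝ (tubeCutoff P s) x‖ * A := by ring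
        _ ≤ 8 * K * A :=
          mul_le_mul_of_nonneg_right (hs.norm_mul_norm_fderiv_tubeCutoff_le hU hK hx) hA0
    rw [hs.tubeCorrection_eq_of_mem_tube hU ha hβ hda haP hxV]
    exact (norm_sub_le _ _).trans (add_le_add (hA x hx)
      ((norm_add_le _ _).trans (add_le_add hcutoff hgradient)))
  · rw [hs.tubeCorrection_eq_of_notMem_tube hU hx hxV]
    exact (hA x hx).trans (le_add_of_nonneg_right (by positivity))

end IsLipschitzDefiningFunction

end TubeCorrection

section RadialBounds

variable {E F : Type*} [NormedAddCommGroup E] [NormedSpace ℝ E] [NormedAddCommGroup F]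
  [NormedSpace ℝ F] [CompleteSpace F] {U : Set E} {β : E → E →L[ℝ] E →L[ℝ] F} {x : E} {M D : ℝ}

theorem contDiffOn_homotopyPrimitive_zero_left {n : ℕ∞} (hU : IsOpen U) (hs : StarConvex ℝ 0 U)
    (hβ : ContDiffOn ℝ n β U) : ContDiffOn ℝ n (homotopyPrimitive 0 β) U :=
  contDiffOn_homotopyPrimitive hU hU (fun _ ht _ hx => lineHomotopy_zero_left_mem hs ht hx) hβ

theorem isPrimitiveOn_homotopyPrimitive_zero_left (hU : IsOpen U) (hs : StarConvex ℝ 0 U)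
    (hβ : ContDiffOn ℝ 1 β U) (hclosed : IsClosedTwoFormOn β U) :
    IsPrimitiveOn (homotopyPrimitive 0 β) β U := fun x hx u v => by
  simpa using fderiv_homotopyPrimitive_sub_swap hU hU
    (fun _ ht _ hx => lineHomotopy_zero_left_mem hs ht hx) hβ hclosed hx u v

theorem norm_iteratedFDeriv_homotopyPrimitive_zero_left_le {n i : ℕ} (hU : IsOpen U)
    (hs : StarConvex ℝ 0 U) (hβ : ContDiffOn ℝ n β U) (hD : 1 ≤ D)
    (hM : ∀ y ∈ U, ∀ j ≤ n, ‖iteratedFDeriv ℝ j β y‖ ≤ M) (hx : x ∈ U) (hxD : ‖x‖ ≤ D)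
    (hi : i ≤ n) : ‖iteratedFDeriv ℝ i (homotopyPrimitive 0 β) x‖ ≤ 2 ^ n * (M * D) := by
  have hM0 : 0 ≤ M := (norm_nonneg _).trans (hM x hx 0 n.zero_le)
  calc
    _ ≤ 2 ^ i * (M * D) :=
      norm_iteratedFDeriv_homotopyPrimitive_le hU hU
        (fun _ ht _ hx => lineHomotopy_zero_left_mem hs ht hx) (hβ.of_le (mod_cast hi))
        (fun y hy j hj => hM y hy j (hj.trans hi)) (by simp)
        (by simpa using ContinuousLinearMap.norm_id_le.trans hD) hx (by simpa using hxD)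
    _ ≤ 2 ^ n * (M * D) := by
      gcongr
      exact one_le_two

end RadialBounds

section ConstrainedPrimitive

variable {E F : Type*} [NormedAddCommGroup E] [InnerProductSpace ℝ E] [NormedAddCommGroup F]
  [NormedSpace ℝ F]

/-- The `1`-form `α` solves the Poincaré problem constrained along `P`: it is a `C^N` primitive of
`β` on `U` which vanishes at the points of `P`, with `‖α‖_{C^N} ≤ C ‖β‖_{C^{N+1}}`. -/
structure IsConstrainedPrimitive (P : Submodule ℝ E) (N : ℕ) (C : ℝ) (α : E → E →L[ℝ] F)
    (β : E → E →L[ℝ] E →L[ℝ] F) (U : Set E) : Prop where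
  contDiffOn : ContDiffOn ℝ N α U
  isPrimitiveOn : IsPrimitiveOn α β U
  eq_zero : ∀ x ∈ U, x ∈ P → α x = 0
  norm_iteratedFDeriv_le : ∀ M : ℝ, (∀ x ∈ U, ∀ i ≤ N + 1, ‖iteratedFDeriv ℝ i β x‖ ≤ M) →
    ∀ x ∈ U, ∀ i ≤ N, ‖iteratedFDeriv ℝ i α x‖ ≤ C * M

variable [CompleteSpace F] {P : Submodule ℝ E} [P.HasOrthogonalProjection] {U : Set E}
  {β : E → E →L[ℝ] E →L[ℝ] F} {D : ℝ}

theorem isConstrainedPrimitive_normalCorrection (N : ℕ) (hU : IsOpen U) (hs : StarConvex ℝ 0 U)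
    (hD : 1 ≤ D) (hUD : ∀ x ∈ U, ‖x‖ ≤ D) (hβ : ContDiffOn ℝ (N + 2 : ℕ) β U)
    (hclosed : IsClosedTwoFormOn β U)
    (hβP : ∀ x ∈ U, x ∈ P → ∀ u ∈ P, ∀ v ∈ P, β x u v = 0) :
    IsConstrainedPrimitive P (N + 1) (2 ^ (N + 2) * D + 2 ^ (N + 2) * (2 ^ (N + 2) * D * D))
      (normalCorrection P (homotopyPrimitive 0 β)) β U := by
  have ha : ContDiffOn ℝ (N + 2 : ℕ) (homotopyPrimitive 0 β) U :=
    contDiffOn_homotopyPrimitive_zero_left hU hs hβ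
  have hda : IsPrimitiveOn (homotopyPrimitive 0 β) β U :=
    isPrimitiveOn_homotopyPrimitive_zero_left hU hs (hβ.of_le (mod_cast by lia)) hclosed
  refine ⟨contDiffOn_normalCorrection hU (mod_cast ha),
    isPrimitiveOn_normalCorrection hU (ha.of_le (mod_cast by lia)) hda, fun x hx hxP => ?_,
    fun M hM x hx i hi => ?_⟩
  · exact normalCorrection_eq_zero
      ((ha.differentiableOn (by simp)).differentiableAt (hU.mem_nhds hx)) hxP
      fun v hv => homotopyPrimitive_zero_left_apply_eq_zero hs hβ.continuousOn hβP hx hxP hv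
  · have hM0 : 0 ≤ M := (norm_nonneg _).trans (hM x hx 0 (Nat.zero_le _))
    have hi' : i + 1 ≤ N + 2 := Nat.add_le_add_right hi 1
    calc
      _ ≤ 2 ^ (N + 2) * (M * D) + 2 ^ (i + 1) * (2 ^ (N + 2) * (M * D) * D) :=
        norm_iteratedFDeriv_normalCorrection_le hU
          (ha.of_le (mod_cast hi')) hD hx (hUD x hx) fun j hj =>
            norm_iteratedFDeriv_homotopyPrimitive_zero_left_le hU hs hβ hD hM hx (hUD x hx)
              (hj.trans hi')
      _ ≤ 2 ^ (N + 2) * (M * D) + 2 ^ (N + 2) * (2 ^ (N + 2) * (M * D) * D) := by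
        gcongr 2 ^ (N + 2) * (M * D) + 2 ^ ?_ * (2 ^ (N + 2) * (M * D) * D)
        exact one_le_two
      _ = _ := by ring

theorem IsLipschitzDefiningFunction.norm_homotopyPrimitive_le {s : E → ℝ} {M : ℝ} {x : E}
    (hs : IsLipschitzDefiningFunction s U) (hU : IsOpen U) (hD : 1 ≤ D) (hβ : ContinuousOn β U)
    (hM : ∀ y ∈ U, ‖β y‖ ≤ M) (hx : x ∈ tube P s) (hxD : ‖x‖ ≤ D) :
    ‖homotopyPrimitive P.starProjection β x‖ ≤ M * D := by
  have hcomplement : ContinuousLinearMap.id ℝ E - P.starProjection = Pᗮ.starProjection :=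
    P.starProjection_orthogonal.symm
  have hbound := norm_iteratedFDeriv_homotopyPrimitive_le (n := 0) hU hs.isOpen_tube
    (fun t ht y hy => hs.lineHomotopy_mem ht hy) (contDiffOn_zero.2 hβ)
    (by simpa using hM) P.starProjection_norm_le
    (hcomplement ▸ Pᗮ.starProjection_norm_le.trans hD) hx
    (P.starProjection_orthogonal_val x ▸ (Pᗮ.norm_starProjection_apply_le x).trans hxD)
  simpa using hbound

theorem isConstrainedPrimitive_tubeCorrection {s : E → ℝ} {K : ℝ}
    (hs : IsLipschitzDefiningFunction s U) (hU : IsOpen U) (hstar : StarConvex ℝ 0 U)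
    (hD : 1 ≤ D) (hUD : ∀ x ∈ U, ‖x‖ ≤ D) (hK : ∀ r, ‖deriv Real.smoothTransition r‖ ≤ K)
    (hβ : ContDiffOn ℝ 1 β U) (hclosed : IsClosedTwoFormOn β U)
    (hβP : ∀ x ∈ U, x ∈ P → ∀ u ∈ P, ∀ v ∈ P, β x u v = 0) :
    IsConstrainedPrimitive P 0 (D + (D + D + 8 * K * D))
      (tubeCorrection P s (homotopyPrimitive 0 β)) β U := by
  have ha : ContDiffOn ℝ 1 (homotopyPrimitive 0 β) U :=
    contDiffOn_homotopyPrimitive_zero_left (n := 1) hU hstar hβ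
  have hda := isPrimitiveOn_homotopyPrimitive_zero_left hU hstar hβ hclosed
  have haP : ∀ x ∈ U, x ∈ P → ∀ v ∈ P, homotopyPrimitive 0 β x v = 0 := fun x hx hxP v hv =>
    homotopyPrimitive_zero_left_apply_eq_zero hstar hβ.continuousOn hβP hx hxP hv
  refine ⟨(hs.contDiffOn_tubeCorrection hU ha hβ hda haP).of_le zero_le_one,
    hs.isPrimitiveOn_tubeCorrection hU ha hβ hda haP,
    fun x hx hxP => hs.tubeCorrection_eq_zero hU ha hβ.continuousOn hda haP hx hxP,
    fun M hM x hx i hi => ?_⟩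
  have hM₀ : ∀ y ∈ U, ‖β y‖ ≤ M := fun y hy => by simpa using hM y hy 0 zero_le_one
  have hMD : 0 ≤ M * D := mul_nonneg ((norm_nonneg (β x)).trans (hM₀ x hx)) (zero_le_one.trans hD)
  have hA : ∀ y ∈ U, ‖homotopyPrimitive 0 β y‖ ≤ M * D := fun y hy => by
    simpa using norm_iteratedFDeriv_homotopyPrimitive_zero_left_le (n := 0) hU hstar
      (contDiffOn_zero.2 hβ.continuousOn) hD (by simpa using hM₀) hy (hUD y hy) le_rfl
  have hB : ∀ y ∈ tube P s, ‖homotopyPrimitive P.starProjection β y‖ ≤ M * D := fun y hy =>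
    hs.norm_homotopyPrimitive_le hU hD hβ.continuousOn hM₀ hy (hUD y (hs.tube_subset hy))
  rw [Nat.le_zero.1 hi, norm_iteratedFDeriv_zero]
  exact (hs.norm_tubeCorrection_le hU ha hβ.continuousOn hda haP hK hA hB hMD hx).trans_eq (by ring)

end ConstrainedPrimitive

theorem stmt_5_general {E F : Type*} [NormedAddCommGroup E] [InnerProductSpace ℝ E]
    [FiniteDimensional ℝ E] [NormedAddCommGroup F] [NormedSpace ℝ F] [CompleteSpace F]
    (N : ℕ) (d : ℝ) :
    ∃ C : ℝ, 0 < C ∧ ∀ (P : Submodule ℝ E) (U : Set E), IsOpen U → Bornology.IsBounded U →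
      StarConvex ℝ 0 U → Metric.diam U ≤ d → ∀ β : E → E →L[ℝ] E →L[ℝ] F,
        ContDiffOn ℝ (N + 1) β U → IsClosedTwoFormOn β U →
        (∀ x ∈ U, x ∈ P → ∀ u ∈ P, ∀ v ∈ P, β x u v = 0) →
        ∃ α : E → E →L[ℝ] F, IsConstrainedPrimitive P N C α β U := by
  obtain ⟨D, hD, hdD⟩ : ∃ D, 1 ≤ D ∧ d ≤ D := ⟨max 1 d, le_max_left _ _, le_max_right _ _⟩
  have : 0 < D := zero_lt_one.trans_le hD
  have hUD (U : Set E) (hb : Bornology.IsBounded U) (hstar : StarConvex ℝ 0 U)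
      (hd : Metric.diam U ≤ d) : ∀ x ∈ U, ‖x‖ ≤ D := fun x hx =>
    (norm_le_diam_of_starConvex hb hstar hx).trans (hd.trans hdD)
  cases N with
  | zero =>
    obtain ⟨K, hK⟩ := exists_norm_deriv_smoothTransition_le
    have hK0 : 0 ≤ K := (norm_nonneg _).trans (hK 0)
    refine ⟨D + (D + D + 8 * K * D), by positivity,
      fun P U hU hb hstar hd β hβ hclosed hβP => ?_⟩
    obtain ⟨s, hs⟩ := exists_isLipschitzDefiningFunction hU hb
    exact ⟨_, isConstrainedPrimitive_tubeCorrection hs hU hstar hD (hUD U hb hstar hd) hK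
      (by simpa using hβ) hclosed hβP⟩
  | succ N =>
    refine ⟨2 ^ (N + 2) * D + 2 ^ (N + 2) * (2 ^ (N + 2) * D * D), by positivity,
      fun P U hU hb hstar hd β hβ hclosed hβP => ?_⟩
    exact ⟨_, isConstrainedPrimitive_normalCorrection N hU hstar hD (hUD U hb hstar hd)
      (mod_cast hβ) hclosed hβP⟩

section Plane

/-- The coordinate plane `P = {x₃ = x₄ = 0}` of `ℝ⁴`; coordinates are numbered from `0` here. -/
noncomputable def plane : Submodule ℝ E4 :=
  (EuclideanSpace.proj (𝕜 := ℝ) (2 : Fin 4)).ker ⊓ (EuclideanSpace.proj (𝕜 := ℝ) (3 : Fin 4)).ker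

theorem mem_plane_iff {x : E4} : x ∈ plane ↔ x 2 = 0 ∧ x 3 = 0 := Iff.rfl

theorem eq_smul_single_add_smul_single_of_mem_plane {x : E4} (hx : x ∈ plane) :
    x = x 0 • EuclideanSpace.single (0 : Fin 4) (1 : ℝ) +
      x 1 • EuclideanSpace.single (1 : Fin 4) (1 : ℝ) := by
  obtain ⟨h2, h3⟩ := mem_plane_iff.1 hx
  ext i
  fin_cases i <;> simp [h2, h3]

theorem apply_apply_eq_zero_of_mem_plane {b : E4 →L[ℝ] E4 →L[ℝ] ℝ} (hb : ∀ u v, b u v = -b v u)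
    (h01 : b (EuclideanSpace.single (0 : Fin 4) (1 : ℝ))
      (EuclideanSpace.single (1 : Fin 4) (1 : ℝ)) = 0) {u v : E4} (hu : u ∈ plane)
    (hv : v ∈ plane) : b u v = 0 := by
  have hself (w : E4) : b w w = 0 := self_eq_neg.1 (hb w w)
  have h10 := hb (EuclideanSpace.single (1 : Fin 4) (1 : ℝ))
    (EuclideanSpace.single (0 : Fin 4) (1 : ℝ))
  rw [eq_smul_single_add_smul_single_of_mem_plane hu,
    eq_smul_single_add_smul_single_of_mem_plane hv]
  simp [hself, h01, h10]

end Plane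

/-- **Poincaré lemma with constraints (Lemma 3.2 of the paper).**
For every `N` and `d` there is a constant `C = C(N, d)` with the following property.
Let `U ⊆ ℝ⁴` be open, bounded, star-shaped with respect to the origin and of diameter at
most `d`. Let `β` be a closed 2-form of class `C^{N+1}` on `U` (2-forms are encoded as maps
into continuous bilinear forms which are pointwise alternating; closedness is the vanishing
of the alternation of the Fréchet derivative) whose pull-back to the plane
`P = {x₃ = x₄ = 0}` vanishes, i.e. `β(x)(e₁, e₂) = 0` for `x ∈ U ∩ P`. Then there is a
1-form `α` of class `C^N` on `U` with `dα = β`, vanishing identically on `U ∩ P`, and with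
`‖α‖_{C^N(U)} ≤ C ‖β‖_{C^{N+1}(U)}`. -/
theorem stmt_5 (N : ℕ) (d : ℝ) :
    ∃ C : ℝ, 0 < C ∧
      ∀ U : Set E4, IsOpen U → Bornology.IsBounded U → StarConvex ℝ 0 U →
        Metric.diam U ≤ d →
        ∀ β : E4 → E4 →L[ℝ] E4 →L[ℝ] ℝ,
          ContDiffOn ℝ (N + 1) β U →
          (∀ x ∈ U, ∀ u v : E4, β x u v = -β x v u) →
          (∀ x ∈ U, ∀ u v w : E4,
            fderiv ℝ β x u v w - fderiv ℝ β x v u w + fderiv ℝ β x w u v = 0) →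
          (∀ x ∈ U, x 2 = 0 → x 3 = 0 →
            β x (EuclideanSpace.single (0 : Fin 4) (1:ℝ)) (EuclideanSpace.single (1 : Fin 4) (1:ℝ)) = 0) →
          ∃ α : E4 → E4 →L[ℝ] ℝ,
            ContDiffOn ℝ N α U ∧
            (∀ x ∈ U, ∀ u v : E4,
              fderiv ℝ α x u v - fderiv ℝ α x v u = β x u v) ∧
            (∀ x ∈ U, x 2 = 0 → x 3 = 0 → α x = 0) ∧
            (∀ M : ℝ, (∀ x ∈ U, ∀ i ≤ N + 1, ‖iteratedFDeriv ℝ i β x‖ ≤ M) →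
              ∀ x ∈ U, ∀ i ≤ N, ‖iteratedFDeriv ℝ i α x‖ ≤ C * M) := by
  obtain ⟨C, hC, hsolve⟩ := stmt_5_general (E := E4) (F := ℝ) N d
  refine ⟨C, hC, fun U hU hb hstar hd β hβ hanti hclosed hβP => ?_⟩
  obtain ⟨α, hα⟩ := hsolve plane U hU hb hstar hd β hβ ⟨hanti, hclosed⟩ fun x hx hxP u hu v hv =>
    have ⟨hx2, hx3⟩ := mem_plane_iff.1 hxP
    apply_apply_eq_zero_of_mem_plane (hanti x hx) (hβP x hx hx2 hx3) hu hv
  exact ⟨α, hα.contDiffOn, hα.isPrimitiveOn,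
    fun x hx hx2 hx3 => hα.eq_zero x hx (mem_plane_iff.2 ⟨hx2, hx3⟩), hα.norm_iteratedFDeriv_le⟩
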